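/- arXiv:1603.01577 — 4 statements merged into one kernel-verified Lean document; each statement's English description precedes it below -/
import Mathlib

section
/- Every symmetric bilinear form β on ℝ³ ⊕ (ℝ³)* satisfying β(A·v, w) + β(v, A·w) = 0 for every A ∈ sl(3,ℝ) and all v, w is a real scalar multiple of B: there exists c ∈ ℝ with β = c·B. -/
/-- The module `ℝ³ ⊕ (ℝ³)*`. -/
abbrev Vmod : Type := (Fin 3 → ℝ) × Module.Dual ℝ (Fin 3 → ℝ)

/-- The standard `sl(3,ℝ)`-module structure on `ℝ³ ⊕ (ℝ³)*`:
`A · (p, q) = (A p, −q ∘ A)`. -/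
def slAct (A : Matrix (Fin 3) (Fin 3) ℝ) (v : Vmod) : Vmod :=
  (A.mulVec v.1, -(v.2 ∘ₗ A.mulVecLin))

/-- The bilinear form `B((p,q),(p′,q′)) = q(p′) + q′(p)` on `ℝ³ ⊕ (ℝ³)*`. -/
def Bform (v w : Vmod) : ℝ := v.2 w.1 + w.2 v.1

/-!
Let `V` be a free module of finite rank at least `3` over a commutative ring. Invariance under the
traceless endomorphisms of rank one, `y ↦ q y • x` with `q x = 0`, already determines the form. On
the dual of `V` such an endomorphism acts, up to sign, by `p ↦ p x • q`, again of rank one. In a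
basis `e` of `V` with dual basis `f`, consider `y ↦ f j y • e i` for `i ≠ j`.

* Since `e i` is the image of `e j`, while every `e k` with `k ≠ j` is killed, `β (e i) (e k) = 0`
  as soon as some `j` differs from both `i` and `k`; this is where the rank is at least `3` (in
  rank `2` the determinant is invariant). The same applies to the dual.
* `β (e i) (f k) = 0` for `k ≠ i`, and `β (e i) (f i) = β (e j) (f j)`, so `β` pairs `V` with its
  dual by a multiple of evaluation. Likewise for the dual with `V`, and symmetry makes the two
  multiples agree.
-/

open Module

section Invariance

variable {R V ι : Type*} [CommRing R] [AddCommGroup V] [Module R V]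

theorem eq_zero_of_isSkewAdjoint_smulRight (e : Basis ι R V) (hι : 3 ≤ ENat.card ι)
    (β : LinearMap.BilinForm R V)
    (hβ : ∀ (q : Dual R V) (x : V), q x = 0 → β.IsSkewAdjoint (q.smulRight x)) :
    β = 0 := by
  refine e.ext fun i ↦ e.ext fun k ↦ ?_
  obtain ⟨j, hji, hjk⟩ := ENat.exists_ne_ne_of_three_le hι i k
  have h := hβ (e.coord j) (e i) (by simp [hji.symm]) (e j) (e k)
  simpa [hjk.symm] using h

theorem eq_zero_of_isSkewAdjoint_smulRight_dual [Finite ι] (e : Basis ι R V)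
    (hι : 3 ≤ ENat.card ι) (β : LinearMap.BilinForm R (Dual R V))
    (hβ : ∀ (q : Dual R V) (x : V), q x = 0 → β.IsSkewAdjoint ((Dual.eval R V x).smulRight q)) :
    β = 0 := by
  classical
  have := Module.Free.of_basis e
  have := Module.Finite.of_basis e
  refine eq_zero_of_isSkewAdjoint_smulRight e.dualBasis hι β fun φ q hφ ↦ ?_
  obtain ⟨x, rfl⟩ := (evalEquiv R V).surjective φ
  exact hβ q x hφ

theorem exists_eq_smul_dualEval [Finite ι] (e : Basis ι R V) (β : V →ₗ[R] Dual R V →ₗ[R] R)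
    (hβ : ∀ (q : Dual R V) (x : V), q x = 0 → ∀ y p, q y * β x p = p x * β y q) :
    ∃ c : R, β = c • Dual.eval R V := by
  classical
  have off_diagonal {i j : ι} (hij : i ≠ j) : β (e i) (e.coord j) = 0 := by
    simpa [hij] using hβ (e.coord j) (e i) (by simp [hij]) (e j) (e.coord j)
  have diagonal (i j : ι) : β (e i) (e.coord i) = β (e j) (e.coord j) := by
    obtain rfl | hij := eq_or_ne i j
    · rfl
    · simpa using hβ (e.coord j) (e i) (by simp [hij]) (e j) (e.coord i)
  obtain ⟨c, hc⟩ : ∃ c, ∀ i, β (e i) (e.coord i) = c := by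
    obtain _ | ⟨⟨i₀⟩⟩ := isEmpty_or_nonempty ι
    · exact ⟨0, isEmptyElim⟩
    · exact ⟨_, fun i ↦ diagonal i i₀⟩
  refine ⟨c, e.ext fun i ↦ e.dualBasis.ext fun j ↦ ?_⟩
  obtain rfl | hij := eq_or_ne i j
  · simp [hc]
  · simp [off_diagonal hij, hij]

theorem smulRight_prodMap_neg_dualMap_apply (q : Dual R V) (x : V) (v : V × Dual R V) :
    (q.smulRight x).prodMap (-(q.smulRight x).dualMap) v = q v.1 • (x, 0) - v.2 x • (0, q) := by
  ext <;> simp [mul_comm]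

theorem exists_eq_mul_add_mul_of_isSkewAdjoint [Finite ι] (e : Basis ι R V)
    (hι : 3 ≤ ENat.card ι) (β : LinearMap.BilinForm R (V × Dual R V))
    (hβ : ∀ A : End R V, LinearMap.trace R V A = 0 → β.IsSkewAdjoint (A.prodMap (-A.dualMap))) :
    ∃ a b : R, ∀ v w, β v w = a * v.2 w.1 + b * w.2 v.1 := by
  have := Module.Free.of_basis e
  have := Module.Finite.of_basis e
  have rank_one (q : Dual R V) (x : V) (hqx : q x = 0) (v w : V × Dual R V) :
      q v.1 * β (x, 0) w - v.2 x * β (0, q) w = w.2 x * β v (0, q) - q w.1 * β v (x, 0) := by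
    simpa [smulRight_prodMap_neg_dualMap_apply, -LinearMap.prodMap_apply, -Prod.smul_mk] using
      hβ (q.smulRight x) (by rwa [LinearMap.trace_smulRight]) v w
  have left_left : β.compl₁₂ (.inl R V (Dual R V)) (.inl R V (Dual R V)) = 0 :=
    eq_zero_of_isSkewAdjoint_smulRight e hι _ fun q x hqx y z ↦ by
      simpa [← neg_smul, ← Prod.smul_mk_zero, -Prod.smul_mk] using rank_one q x hqx (y, 0) (z, 0)
  have right_right : β.compl₁₂ (.inr R V (Dual R V)) (.inr R V (Dual R V)) = 0 :=
    eq_zero_of_isSkewAdjoint_smulRight_dual e hι _ fun q x hqx p r ↦ by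
      simpa [← neg_smul, ← Prod.smul_zero_mk, -Prod.smul_mk, neg_eq_iff_eq_neg] using
        rank_one q x hqx (0, p) (0, r)
  obtain ⟨b, left_right⟩ := exists_eq_smul_dualEval e
    (β.compl₁₂ (.inl R V (Dual R V)) (.inr R V (Dual R V))) fun q x hqx y p ↦ by
      simpa using rank_one q x hqx (y, 0) (0, p)
  obtain ⟨a, right_left⟩ := exists_eq_smul_dualEval e
    (β.compl₁₂ (.inr R V (Dual R V)) (.inl R V (Dual R V))).flip fun q x hqx y p ↦ by
      simpa using (rank_one q x hqx (0, p) (y, 0)).symm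
  refine ⟨a, b, fun ⟨x, p⟩ ⟨y, q⟩ ↦ ?_⟩
  calc β (x, p) (y, q)
      = β (x, 0) (y, 0) + β (x, 0) (0, q) + (β (0, p) (y, 0) + β (0, p) (0, q)) := by
        simp [← map_add, ← LinearMap.add_apply]
    _ = 0 + b * q x + (a * p y + 0) := by
        congr 2
        · exact LinearMap.congr_fun₂ left_left x y
        · exact LinearMap.congr_fun₂ left_right x q
        · exact LinearMap.congr_fun₂ right_left y p
        · exact LinearMap.congr_fun₂ right_right p q
    _ = a * p y + b * q x := by ring

theorem invariant_symmetric_bilinear_eq_smul_Bform_general [Module.Free R V]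
    (hV : 3 ≤ finrank R V) (β : LinearMap.BilinForm R (V × Dual R V)) (hsymm : β.IsSymm)
    (hinv : ∀ A : End R V, LinearMap.trace R V A = 0 →
      β.IsSkewAdjoint (A.prodMap (-A.dualMap))) :
    ∃ c : R, ∀ v w, β v w = c * (v.2 w.1 + w.2 v.1) := by
  obtain _ | _ := subsingleton_or_nontrivial R
  · exact ⟨0, fun _ _ ↦ Subsingleton.elim _ _⟩
  have : Module.Finite R V := finite_of_finrank_pos (by lia)
  obtain ⟨a, b, hβ⟩ :=
    exists_eq_mul_add_mul_of_isSkewAdjoint (finBasis R V) (by simpa using mod_cast hV) β hinv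
  have swap (x : V) (p : Dual R V) : b * p x = a * p x := by
    simpa [hβ] using hsymm.eq (x, 0) (0, p)
  exact ⟨a, fun v w ↦ by rw [hβ, swap, mul_add]⟩

end Invariance

theorem slAct_eq_prodMap (A : Matrix (Fin 3) (Fin 3) ℝ) :
    slAct A = A.toLin'.prodMap (-A.toLin'.dualMap) :=
  rfl

/-- Every symmetric `sl(3,ℝ)`-invariant bilinear form on `ℝ³ ⊕ (ℝ³)*` is a real scalar
multiple of `B`. -/
theorem invariant_symmetric_bilinear_eq_smul_Bform
    (β : LinearMap.BilinForm ℝ Vmod)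
    (hsymm : ∀ v w : Vmod, β v w = β w v)
    (hinv : ∀ A : Matrix (Fin 3) (Fin 3) ℝ, A.trace = 0 →
      ∀ v w : Vmod, β (slAct A v) w + β v (slAct A w) = 0) :
    ∃ c : ℝ, ∀ v w : Vmod, β v w = c * Bform v w := by
  refine invariant_symmetric_bilinear_eq_smul_Bform_general (by simp) β ⟨hsymm⟩ fun T hT v w ↦ ?_
  obtain ⟨A, rfl⟩ := Matrix.toLin'.surjective T
  have h := hinv A (by rwa [Matrix.trace_toLin'_eq] at hT) v w
  rwa [slAct_eq_prodMap, add_eq_zero_iff_eq_neg, ← map_neg] at h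
end

section
/- A 6×6 real matrix X, written in 3×3 blocks as X = [[P,Q],[R,S]], lies in so(3,3) if and only if S = −Pᵀ and Q, R are skew-symmetric. Consequently so(3,3) decomposes as the internal direct sum so(3,3) = 𝔤 ⊕ 𝔠 ⊕ 𝔳* ⊕ 𝔳, where 𝔤 = ι(sl(3,ℝ)), 𝔠 = ℝ·[[I₃,0],[0,−I₃]], 𝔳* = {[[0,Q],[0,0]] : Qᵀ = −Q}, and 𝔳 = {[[0,0],[R,0]] : Rᵀ = −R}. Each of these four subspaces is invariant under X ↦ [ι(A), X] for every A ∈ sl(3,ℝ), and as sl(3,ℝ)-modules: 𝔤 is equivariantly isomorphic to the adjoint module sl(3,ℝ), 𝔠 is a trivial 1-dimensional module, 𝔳 is equivariantly isomorphic to the standard module ℝ³ (action v ↦ A v), and 𝔳* is equivariantly isomorphic to the dual module (ℝ³)* (action q ↦ −q∘A). -/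
open Matrix

abbrev M33 := Matrix (Fin 3) (Fin 3) ℝ
abbrev M66 := Matrix (Fin 3 ⊕ Fin 3) (Fin 3 ⊕ Fin 3) ℝ

/-- The matrix `J = [[0,I₃],[I₃,0]]` defining `so(3,3)`. -/
def Jmat : M66 := Matrix.fromBlocks 0 1 1 0

/-- Membership in `so(3,3)`: `XᵀJ + JX = 0`. -/
def InSO33 (X : M66) : Prop := Xᵀ * Jmat + Jmat * X = 0

/-- The embedding `ι : sl(3,ℝ) → so(3,3)`, `A ↦ [[A,0],[0,−Aᵀ]]`. -/
def iotaMat (A : M33) : M66 := Matrix.fromBlocks A 0 0 (-Aᵀ)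

/-- The subspace `𝔤 = ι(sl(3,ℝ))`. -/
def gSub : Submodule ℝ M66 where
  carrier := {X | ∃ A : M33, A.trace = 0 ∧ X = iotaMat A}
  zero_mem' := ⟨0, by simp, by simp [iotaMat]⟩
  add_mem' := by
    rintro X Y ⟨A, hA, rfl⟩ ⟨B, hB, rfl⟩
    exact ⟨A + B, by simp [hA, hB],
      by simp [iotaMat, Matrix.fromBlocks_add, Matrix.transpose_add, neg_add, add_comm]⟩
  smul_mem' := by
    rintro c X ⟨A, hA, rfl⟩
    exact ⟨c • A, by simp [hA],
      by simp [iotaMat, Matrix.fromBlocks_smul, Matrix.transpose_smul]⟩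

/-- The subspace `𝔠 = ℝ·[[I₃,0],[0,−I₃]]`. -/
def cSub : Submodule ℝ M66 :=
  Submodule.span ℝ {Matrix.fromBlocks (1 : M33) 0 0 (-1)}

/-- The subspace `𝔳* = {[[0,Q],[0,0]] : Qᵀ = −Q}`. -/
def vstarSub : Submodule ℝ M66 where
  carrier := {X | ∃ Q : M33, Qᵀ = -Q ∧ X = Matrix.fromBlocks 0 Q 0 0}
  zero_mem' := ⟨0, by simp, by simp⟩
  add_mem' := by
    rintro X Y ⟨Q, hQ, rfl⟩ ⟨Q', hQ', rfl⟩
    exact ⟨Q + Q', by simp [hQ, hQ', Matrix.transpose_add, neg_add, add_comm],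
      by simp [Matrix.fromBlocks_add]⟩
  smul_mem' := by
    rintro c X ⟨Q, hQ, rfl⟩
    exact ⟨c • Q, by simp [Matrix.transpose_smul, hQ],
      by simp [Matrix.fromBlocks_smul]⟩

/-- The subspace `𝔳 = {[[0,0],[R,0]] : Rᵀ = −R}`. -/
def vSub : Submodule ℝ M66 where
  carrier := {X | ∃ R : M33, Rᵀ = -R ∧ X = Matrix.fromBlocks 0 0 R 0}
  zero_mem' := ⟨0, by simp, by simp⟩
  add_mem' := by
    rintro X Y ⟨Q, hQ, rfl⟩ ⟨Q', hQ', rfl⟩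
    exact ⟨Q + Q', by simp [hQ, hQ', Matrix.transpose_add, neg_add, add_comm],
      by simp [Matrix.fromBlocks_add]⟩
  smul_mem' := by
    rintro c X ⟨Q, hQ, rfl⟩
    exact ⟨c • Q, by simp [Matrix.transpose_smul, hQ],
      by simp [Matrix.fromBlocks_smul]⟩

/-- `sl(3,ℝ)` as a submodule of `M33`. -/
def slSub : Submodule ℝ M33 := LinearMap.ker (Matrix.traceLinearMap (Fin 3) ℝ ℝ)

/-- Bracket action of a traceless matrix on `slSub` (adjoint action). -/
def adAct (A : M33) (X : slSub) : slSub :=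
  ⟨⁅A, (X : M33)⁆, by
    have : Matrix.trace ⁅A, (X : M33)⁆ = 0 := LieAlgebra.matrix_trace_commutator_zero _ _ _ _
    simp [slSub, LinearMap.mem_ker, this]⟩

/-!
Every `X ∈ so(3,3)` is `ι(P) + [[0, Q], [R, 0]]` with `Q` and `R` skew-symmetric, and bracketing
with `ι(A)` acts on the blocks by `P ↦ [A, P]`, `Q ↦ AQ + QAᵀ` and `R ↦ -(AᵀR + RA)`. Splitting `P`
into its traceless and scalar parts separates `𝔤` from `𝔠 = ℝ·ι(1)`. A skew-symmetric `3 × 3` matrix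
is the matrix of a cross product `v ⨯₃ ·`, and in terms of `v` the actions on `R` and `Q` are
`v ↦ Av - (tr A) v` and `v ↦ (tr A) v - Aᵀv`: all of `gl(3,ℝ)` acts on `𝔳` and `𝔳*` as on `ℝ³` and
its dual twisted by the trace character, and the twist vanishes on `sl(3,ℝ)`.
-/

open LieAlgebra.Orthogonal

section Blocks

variable {K l : Type*} [CommRing K]

/-- The Levi factor `A ↦ [[A, 0], [0, -Aᵀ]]` of the stabilizer of a maximal isotropic subspace in
the split orthogonal Lie algebra `LieAlgebra.Orthogonal.typeD l K`, as a linear map on all of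
`gl(l, K)`. -/
def leviBlock : Matrix l l K →ₗ[K] Matrix (l ⊕ l) (l ⊕ l) K where
  toFun A := fromBlocks A 0 0 (-Aᵀ)
  map_add' A B := by simp [fromBlocks_add, add_comm]
  map_smul' c A := by simp [fromBlocks_smul]

/-- The inclusion `Q ↦ [[0, Q], [0, 0]]` of the upper right block. -/
def upperBlock : Matrix l l K →ₗ[K] Matrix (l ⊕ l) (l ⊕ l) K where
  toFun Q := fromBlocks 0 Q 0 0
  map_add' Q Q' := by simp [fromBlocks_add]
  map_smul' c Q := by simp [fromBlocks_smul]

/-- The inclusion `R ↦ [[0, 0], [R, 0]]` of the lower left block. -/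
def lowerBlock : Matrix l l K →ₗ[K] Matrix (l ⊕ l) (l ⊕ l) K where
  toFun R := fromBlocks 0 0 R 0
  map_add' R R' := by simp [fromBlocks_add]
  map_smul' c R := by simp [fromBlocks_smul]

theorem leviBlock_apply (A : Matrix l l K) : leviBlock A = fromBlocks A 0 0 (-Aᵀ) := rfl

theorem upperBlock_apply (Q : Matrix l l K) : upperBlock Q = fromBlocks 0 Q 0 0 := rfl

theorem lowerBlock_apply (R : Matrix l l K) : lowerBlock R = fromBlocks 0 0 R 0 := rfl

theorem leviBlock_add_upperBlock_add_lowerBlock (P Q R : Matrix l l K) :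
    leviBlock P + upperBlock Q + lowerBlock R = fromBlocks P Q R (-Pᵀ) := by
  simp [leviBlock_apply, upperBlock_apply, lowerBlock_apply, fromBlocks_add]

theorem leviBlock_add_upperBlock_add_lowerBlock_inj {P Q R P' Q' R' : Matrix l l K} :
    leviBlock P + upperBlock Q + lowerBlock R = leviBlock P' + upperBlock Q' + lowerBlock R' ↔
      P = P' ∧ Q = Q' ∧ R = R' := by
  simp only [leviBlock_add_upperBlock_add_lowerBlock, fromBlocks_inj]
  exact ⟨fun ⟨hP, hQ, hR, _⟩ => ⟨hP, hQ, hR⟩, by rintro ⟨rfl, rfl, rfl⟩; simp⟩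

theorem leviBlock_injective : Function.Injective (leviBlock (K := K) (l := l)) :=
  fun _ _ h => (fromBlocks_inj.1 h).1

theorem upperBlock_injective : Function.Injective (upperBlock (K := K) (l := l)) :=
  fun _ _ h => (fromBlocks_inj.1 h).2.1

theorem lowerBlock_injective : Function.Injective (lowerBlock (K := K) (l := l)) :=
  fun _ _ h => (fromBlocks_inj.1 h).2.2.1

variable [Fintype l]

theorem lie_leviBlock_leviBlock (A B : Matrix l l K) :
    ⁅leviBlock A, leviBlock B⁆ = leviBlock ⁅A, B⁆ := by
  simp [Ring.lie_def, leviBlock_apply, fromBlocks_multiply, sub_eq_add_neg, fromBlocks_neg,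
    fromBlocks_add, add_comm]

theorem lie_leviBlock_upperBlock (A Q : Matrix l l K) :
    ⁅leviBlock A, upperBlock Q⁆ = upperBlock (A * Q + Q * Aᵀ) := by
  simp [Ring.lie_def, leviBlock_apply, upperBlock_apply, fromBlocks_multiply, sub_eq_add_neg,
    fromBlocks_neg, fromBlocks_add]

theorem lie_leviBlock_lowerBlock (A R : Matrix l l K) :
    ⁅leviBlock A, lowerBlock R⁆ = lowerBlock (-(Aᵀ * R + R * A)) := by
  simp [Ring.lie_def, leviBlock_apply, lowerBlock_apply, fromBlocks_multiply, sub_eq_add_neg,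
    fromBlocks_neg, fromBlocks_add, add_comm]

variable [DecidableEq l]

theorem lie_leviBlock_smul_one (A : Matrix l l K) (t : K) :
    ⁅leviBlock A, leviBlock (t • (1 : Matrix l l K))⁆ = 0 := by
  rw [lie_leviBlock_leviBlock]
  simp [Ring.lie_def]

theorem fromBlocks_mem_typeD_iff {P Q R S : Matrix l l K} :
    fromBlocks P Q R S ∈ typeD l K ↔ S = -Pᵀ ∧ Qᵀ = -Q ∧ Rᵀ = -R := by
  rw [typeD, mem_skewAdjointMatricesLieSubalgebra, mem_skewAdjointMatricesSubmodule]
  simp only [Matrix.IsSkewAdjoint, IsAdjointPair, JD, fromBlocks_transpose, fromBlocks_neg,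
    fromBlocks_multiply, mul_zero, mul_one, zero_mul, one_mul, zero_add, add_zero, fromBlocks_inj]
  constructor
  · rintro ⟨hR, hS, -, hQ⟩
    exact ⟨by rw [hS, neg_neg], hQ, hR⟩
  · rintro ⟨rfl, hQ, hR⟩
    simp [hQ, hR]

theorem mem_typeD_iff_exists {X : Matrix (l ⊕ l) (l ⊕ l) K} :
    X ∈ typeD l K ↔ ∃ P, ∃ Q ∈ so l K, ∃ R ∈ so l K,
      X = leviBlock P + upperBlock Q + lowerBlock R := by
  simp only [mem_so, leviBlock_add_upperBlock_add_lowerBlock]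
  constructor
  · intro hX
    rw [← fromBlocks_toBlocks X, fromBlocks_mem_typeD_iff] at hX
    obtain ⟨hS, hQ, hR⟩ := hX
    exact ⟨X.toBlocks₁₁, X.toBlocks₁₂, hQ, X.toBlocks₂₁, hR, by rw [← hS, fromBlocks_toBlocks]⟩
  · rintro ⟨P, Q, hQ, R, hR, rfl⟩
    exact fromBlocks_mem_typeD_iff.2 ⟨rfl, hQ, hR⟩

theorem mul_add_mul_transpose_mem_so (A : Matrix l l K) {Q : Matrix l l K} (hQ : Q ∈ so l K) :
    A * Q + Q * Aᵀ ∈ so l K := by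
  rw [mem_so] at hQ ⊢
  simp [hQ, add_comm]

end Blocks

section Trace

variable {K l : Type*} [CommRing K] [Fintype l] [DecidableEq l]

theorem exists_trace_eq_zero_add_smul_one (hl : IsUnit (Fintype.card l : K)) (P : Matrix l l K) :
    ∃ A : Matrix l l K, A.trace = 0 ∧ ∃ t : K, P = A + t • 1 := by
  obtain ⟨t, ht⟩ := hl.dvd (a := P.trace)
  exact ⟨P - t • 1, by simp [ht, mul_comm], t, by simp⟩

theorem add_smul_one_inj_of_trace_eq_zero (hl : IsUnit (Fintype.card l : K))
    {A A' : Matrix l l K} (hA : A.trace = 0) (hA' : A'.trace = 0) {t t' : K} :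
    A + t • 1 = A' + t' • 1 ↔ A = A' ∧ t = t' := by
  refine ⟨fun h => ?_, by rintro ⟨rfl, rfl⟩; rfl⟩
  have ht : t = t' := by
    have htr := congrArg Matrix.trace h
    simp only [trace_add, trace_smul, trace_one, hA, hA', zero_add, smul_eq_mul] at htr
    exact hl.mul_right_cancel htr
  subst ht
  exact ⟨add_right_cancel h, rfl⟩

end Trace

section CrossMatrix

variable {K : Type*} [CommRing K]

/-- The matrix of the cross product `w ↦ v ⨯₃ w`, as a linear function of `v`. -/
def crossMatrix : (Fin 3 → K) →ₗ[K] Matrix (Fin 3) (Fin 3) K :=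
  LinearMap.toMatrix'.toLinearMap ∘ₗ crossProduct

theorem crossMatrix_apply (v : Fin 3 → K) :
    crossMatrix v = !![0, -v 2, v 1; v 2, 0, -v 0; -v 1, v 0, 0] := by
  ext i j
  fin_cases i <;> fin_cases j <;> simp [crossMatrix, LinearMap.toMatrix'_apply, cross_apply]

theorem crossMatrix_mem_so (v : Fin 3 → K) : crossMatrix v ∈ so (Fin 3) K := by
  rw [mem_so, crossMatrix_apply]
  ext i j
  fin_cases i <;> fin_cases j <;> simp

-- This linearizes `Bᵀ * crossMatrix (B *ᵥ v) * B = B.det • crossMatrix v` at `B = 1`.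
theorem crossMatrix_mulVec_sub_trace_smul (A : Matrix (Fin 3) (Fin 3) K) (v : Fin 3 → K) :
    crossMatrix (A *ᵥ v - A.trace • v) = -(Aᵀ * crossMatrix v + crossMatrix v * A) := by
  simp only [crossMatrix_apply]
  ext i j
  fin_cases i <;> fin_cases j <;>
    simp [mul_apply, mulVec, vecMul, dotProduct, Fin.sum_univ_three, trace_fin_three] <;>
    ring

theorem crossMatrix_trace_smul_sub_transpose_mulVec (A : Matrix (Fin 3) (Fin 3) K)
    (v : Fin 3 → K) :
    crossMatrix (A.trace • v - Aᵀ *ᵥ v) = A * crossMatrix v + crossMatrix v * Aᵀ := by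
  have h := crossMatrix_mulVec_sub_trace_smul (-Aᵀ) v
  simpa [neg_mulVec, ← sub_eq_neg_add] using h

attribute [local instance] LieRing.ofAssociativeRing

/-- The identification of `K³` with `so(3, K)` through the cross product. -/
def crossMatrixEquiv [IsAddTorsionFree K] : (Fin 3 → K) ≃ₗ[K] so (Fin 3) K where
  __ := crossMatrix.codRestrict (so (Fin 3) K).toSubmodule crossMatrix_mem_so
  invFun R := ![R.1 2 1, R.1 0 2, R.1 1 0]
  left_inv v := by
    ext i
    fin_cases i <;> simp [crossMatrix_apply]
  right_inv R := by
    have hR (i j) : R.1 j i = -R.1 i j := congrFun₂ ((mem_so _ _ _).1 R.2) i j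
    have hdiag (i) : R.1 i i = 0 := self_eq_neg.1 (hR i i)
    ext i j
    fin_cases i <;> fin_cases j <;> simp [crossMatrix_apply, hdiag, ← hR]

end CrossMatrix

section Dual

variable {K n : Type*} [CommSemiring K] [Fintype n] [DecidableEq n]

theorem dotProductEquiv_symm_comp_mulVecLin (A : Matrix n n K) (q : Module.Dual K (n → K)) :
    (dotProductEquiv K n).symm (q ∘ₗ A.mulVecLin) = Aᵀ *ᵥ (dotProductEquiv K n).symm q := by
  obtain ⟨w, rfl⟩ := (dotProductEquiv K n).surjective q
  rw [LinearEquiv.symm_apply_eq, LinearEquiv.symm_apply_apply]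
  refine LinearMap.ext fun v => ?_
  simp [mulVec_transpose, dotProduct_mulVec]

end Dual

section SplitOrthogonal33

attribute [local instance] LieRing.ofAssociativeRing

theorem iotaMat_eq_leviBlock (A : M33) : iotaMat A = leviBlock A := rfl

theorem inSO33_iff_mem_typeD {X : M66} : InSO33 X ↔ X ∈ typeD (Fin 3) ℝ := by
  rw [typeD, mem_skewAdjointMatricesLieSubalgebra, mem_skewAdjointMatricesSubmodule,
    Matrix.IsSkewAdjoint, IsAdjointPair, mul_neg, ← add_eq_zero_iff_eq_neg]
  rfl

theorem gSub_eq_map : gSub = slSub.map leviBlock := by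
  ext X
  exact exists_congr fun A => and_congr Iff.rfl eq_comm

theorem cSub_eq_map : cSub = (ℝ ∙ (1 : M33)).map leviBlock := by
  simp [cSub, Submodule.map_span, leviBlock_apply]

theorem vstarSub_eq_map : vstarSub = (so (Fin 3) ℝ).toSubmodule.map upperBlock := by
  ext X
  exact exists_congr fun Q => and_congr (mem_so _ _ Q).symm eq_comm

theorem vSub_eq_map : vSub = (so (Fin 3) ℝ).toSubmodule.map lowerBlock := by
  ext X
  exact exists_congr fun R => and_congr (mem_so _ _ R).symm eq_comm

theorem mem_gSub_iff {X : M66} : X ∈ gSub ↔ ∃ A : M33, A.trace = 0 ∧ leviBlock A = X := by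
  rw [gSub_eq_map]
  rfl

theorem mem_cSub_iff {X : M66} : X ∈ cSub ↔ ∃ t : ℝ, leviBlock (t • (1 : M33)) = X := by
  simp [cSub_eq_map, Submodule.mem_span_singleton]

theorem mem_vstarSub_iff {X : M66} : X ∈ vstarSub ↔ ∃ Q ∈ so (Fin 3) ℝ, upperBlock Q = X := by
  rw [vstarSub_eq_map]
  rfl

theorem mem_vSub_iff {X : M66} : X ∈ vSub ↔ ∃ R ∈ so (Fin 3) ℝ, lowerBlock R = X := by
  rw [vSub_eq_map]
  rfl

theorem inSO33_iff_exists_add {X : M66} :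
    InSO33 X ↔ ∃ a ∈ gSub, ∃ c ∈ cSub, ∃ q ∈ vstarSub, ∃ r ∈ vSub, X = a + c + q + r := by
  rw [inSO33_iff_mem_typeD, mem_typeD_iff_exists]
  constructor
  · rintro ⟨P, Q, hQ, R, hR, rfl⟩
    obtain ⟨A, hA, t, rfl⟩ := exists_trace_eq_zero_add_smul_one (by simp) P
    exact ⟨_, mem_gSub_iff.2 ⟨A, hA, rfl⟩, _, mem_cSub_iff.2 ⟨t, rfl⟩,
      _, mem_vstarSub_iff.2 ⟨Q, hQ, rfl⟩, _, mem_vSub_iff.2 ⟨R, hR, rfl⟩, by rw [map_add]⟩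
  · rintro ⟨a, ha, c, hc, q, hq, r, hr, rfl⟩
    obtain ⟨A, -, rfl⟩ := mem_gSub_iff.1 ha
    obtain ⟨t, rfl⟩ := mem_cSub_iff.1 hc
    obtain ⟨Q, hQ, rfl⟩ := mem_vstarSub_iff.1 hq
    obtain ⟨R, hR, rfl⟩ := mem_vSub_iff.1 hr
    exact ⟨A + t • 1, Q, hQ, R, hR, by rw [map_add]⟩

theorem summands_eq_of_add_eq (a a' : gSub) (c c' : cSub) (q q' : vstarSub) (r r' : vSub)
    (h : (a : M66) + c + q + r = (a' : M66) + c' + q' + r') :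
    a = a' ∧ c = c' ∧ q = q' ∧ r = r' := by
  simp only [Subtype.ext_iff]
  obtain ⟨A, hA, ha⟩ := mem_gSub_iff.1 a.2
  obtain ⟨A', hA', ha'⟩ := mem_gSub_iff.1 a'.2
  obtain ⟨t, hc⟩ := mem_cSub_iff.1 c.2
  obtain ⟨t', hc'⟩ := mem_cSub_iff.1 c'.2
  obtain ⟨Q, -, hq⟩ := mem_vstarSub_iff.1 q.2
  obtain ⟨Q', -, hq'⟩ := mem_vstarSub_iff.1 q'.2
  obtain ⟨R, -, hr⟩ := mem_vSub_iff.1 r.2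
  obtain ⟨R', -, hr'⟩ := mem_vSub_iff.1 r'.2
  rw [← ha, ← ha', ← hc, ← hc', ← hq, ← hq', ← hr, ← hr'] at h ⊢
  rw [← map_add, ← map_add, leviBlock_add_upperBlock_add_lowerBlock_inj,
    add_smul_one_inj_of_trace_eq_zero (by simp) hA hA'] at h
  obtain ⟨⟨rfl, rfl⟩, rfl, rfl⟩ := h
  exact ⟨rfl, rfl, rfl, rfl⟩

theorem lie_iotaMat_mem_gSub (A : M33) {X : M66} (hX : X ∈ gSub) : ⁅iotaMat A, X⁆ ∈ gSub := by
  obtain ⟨B, -, rfl⟩ := mem_gSub_iff.1 hX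
  exact mem_gSub_iff.2
    ⟨⁅A, B⁆, LieAlgebra.matrix_trace_commutator_zero _ _ A B, (lie_leviBlock_leviBlock A B).symm⟩

theorem lie_iotaMat_eq_zero_of_mem_cSub (A : M33) {X : M66} (hX : X ∈ cSub) :
    ⁅iotaMat A, X⁆ = 0 := by
  obtain ⟨t, rfl⟩ := mem_cSub_iff.1 hX
  exact lie_leviBlock_smul_one A t

theorem lie_iotaMat_mem_vstarSub (A : M33) {X : M66} (hX : X ∈ vstarSub) :
    ⁅iotaMat A, X⁆ ∈ vstarSub := by
  obtain ⟨Q, hQ, rfl⟩ := mem_vstarSub_iff.1 hX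
  exact mem_vstarSub_iff.2
    ⟨_, mul_add_mul_transpose_mem_so A hQ, (lie_leviBlock_upperBlock A Q).symm⟩

theorem lie_iotaMat_mem_vSub (A : M33) {X : M66} (hX : X ∈ vSub) : ⁅iotaMat A, X⁆ ∈ vSub := by
  obtain ⟨R, hR, rfl⟩ := mem_vSub_iff.1 hX
  refine mem_vSub_iff.2 ⟨_, neg_mem ?_, (lie_leviBlock_lowerBlock A R).symm⟩
  simpa using mul_add_mul_transpose_mem_so Aᵀ hR

theorem finrank_cSub : Module.finrank ℝ cSub = 1 := by
  have hone : leviBlock (1 : M33) ≠ 0 := (map_ne_zero_iff _ leviBlock_injective).2 one_ne_zero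
  rw [cSub_eq_map, Submodule.map_span, Set.image_singleton]
  exact finrank_span_singleton hone

/-- The isomorphism of the adjoint module `sl(3, ℝ)` with `𝔤`, given by `ι`. -/
noncomputable def slEquivGSub : slSub ≃ₗ[ℝ] gSub :=
  slSub.equivMapOfInjective leviBlock leviBlock_injective ≪≫ₗ
    LinearEquiv.ofEq _ _ gSub_eq_map.symm

/-- The isomorphism of the standard module `ℝ³` with `𝔳`, given by cross product matrices. -/
noncomputable def standardEquivVSub : (Fin 3 → ℝ) ≃ₗ[ℝ] vSub :=
  crossMatrixEquiv ≪≫ₗ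
    (so (Fin 3) ℝ).toSubmodule.equivMapOfInjective lowerBlock lowerBlock_injective ≪≫ₗ
      LinearEquiv.ofEq _ _ vSub_eq_map.symm

/-- The isomorphism of the dual module `(ℝ³)*` with `𝔳*`: a functional is represented by a vector
through the dot product, and then by the cross product matrix of that vector. -/
noncomputable def dualEquivVstarSub : Module.Dual ℝ (Fin 3 → ℝ) ≃ₗ[ℝ] vstarSub :=
  (dotProductEquiv ℝ (Fin 3)).symm ≪≫ₗ crossMatrixEquiv ≪≫ₗ
    (so (Fin 3) ℝ).toSubmodule.equivMapOfInjective upperBlock upperBlock_injective ≪≫ₗ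
      LinearEquiv.ofEq _ _ vstarSub_eq_map.symm

theorem coe_standardEquivVSub (v : Fin 3 → ℝ) :
    (standardEquivVSub v : M66) = lowerBlock (crossMatrix v) := rfl

theorem coe_dualEquivVstarSub (q : Module.Dual ℝ (Fin 3 → ℝ)) :
    (dualEquivVstarSub q : M66) =
      upperBlock (crossMatrix ((dotProductEquiv ℝ (Fin 3)).symm q)) := rfl

theorem slEquivGSub_adAct (A : M33) (X : slSub) :
    (slEquivGSub (adAct A X) : M66) = ⁅iotaMat A, (slEquivGSub X : M66)⁆ :=
  (lie_leviBlock_leviBlock A X).symm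

theorem standardEquivVSub_mulVec_sub_trace_smul (A : M33) (v : Fin 3 → ℝ) :
    (standardEquivVSub (A *ᵥ v - A.trace • v) : M66) =
      ⁅iotaMat A, (standardEquivVSub v : M66)⁆ := by
  rw [coe_standardEquivVSub, coe_standardEquivVSub, iotaMat_eq_leviBlock,
    lie_leviBlock_lowerBlock, crossMatrix_mulVec_sub_trace_smul]

theorem dualEquivVstarSub_trace_smul_sub_comp (A : M33) (q : Module.Dual ℝ (Fin 3 → ℝ)) :
    (dualEquivVstarSub (A.trace • q - q ∘ₗ A.mulVecLin) : M66) =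
      ⁅iotaMat A, (dualEquivVstarSub q : M66)⁆ := by
  rw [coe_dualEquivVstarSub, coe_dualEquivVstarSub, iotaMat_eq_leviBlock,
    lie_leviBlock_upperBlock, map_sub, map_smul, dotProductEquiv_symm_comp_mulVecLin,
    crossMatrix_trace_smul_sub_transpose_mulVec]

end SplitOrthogonal33

theorem so33_block_characterization_and_decomposition_general :
    (∀ P Q R S : M33, InSO33 (fromBlocks P Q R S) ↔ (S = -Pᵀ ∧ Qᵀ = -Q ∧ Rᵀ = -R)) ∧
    (∀ X : M66, InSO33 X ↔
      ∃ a ∈ gSub, ∃ c ∈ cSub, ∃ q ∈ vstarSub, ∃ r ∈ vSub, X = a + c + q + r) ∧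
    (∀ (a a' : gSub) (c c' : cSub) (q q' : vstarSub) (r r' : vSub),
      (a : M66) + c + q + r = (a' : M66) + c' + q' + r' →
        a = a' ∧ c = c' ∧ q = q' ∧ r = r') ∧
    (∀ A : M33,
      (∀ X ∈ gSub, ⁅iotaMat A, X⁆ ∈ gSub) ∧
      (∀ X ∈ cSub, ⁅iotaMat A, X⁆ ∈ cSub) ∧
      (∀ X ∈ vstarSub, ⁅iotaMat A, X⁆ ∈ vstarSub) ∧
      (∀ X ∈ vSub, ⁅iotaMat A, X⁆ ∈ vSub)) ∧
    (∃ φ : slSub ≃ₗ[ℝ] gSub, ∀ (A : M33) (X : slSub),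
      (φ (adAct A X) : M66) = ⁅iotaMat A, (φ X : M66)⁆) ∧
    (Module.finrank ℝ cSub = 1 ∧ ∀ A : M33, ∀ X ∈ cSub, ⁅iotaMat A, X⁆ = 0) ∧
    (∃ φ : (Fin 3 → ℝ) ≃ₗ[ℝ] vSub, ∀ (A : M33) (v : Fin 3 → ℝ),
      (φ (A *ᵥ v - A.trace • v) : M66) = ⁅iotaMat A, (φ v : M66)⁆) ∧
    (∃ ψ : Module.Dual ℝ (Fin 3 → ℝ) ≃ₗ[ℝ] vstarSub,
      ∀ (A : M33) (q : Module.Dual ℝ (Fin 3 → ℝ)),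
        (ψ (A.trace • q - q ∘ₗ A.mulVecLin) : M66) = ⁅iotaMat A, (ψ q : M66)⁆) := by
  refine ⟨fun _ _ _ _ => inSO33_iff_mem_typeD.trans fromBlocks_mem_typeD_iff,
    fun _ => inSO33_iff_exists_add, summands_eq_of_add_eq, fun A => ⟨?_, ?_, ?_, ?_⟩,
    ⟨slEquivGSub, slEquivGSub_adAct⟩,
    ⟨finrank_cSub, fun A _ => lie_iotaMat_eq_zero_of_mem_cSub A⟩,
    ⟨standardEquivVSub, standardEquivVSub_mulVec_sub_trace_smul⟩,
    ⟨dualEquivVstarSub, dualEquivVstarSub_trace_smul_sub_comp⟩⟩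
  · exact fun _ => lie_iotaMat_mem_gSub A
  · intro X hX
    rw [lie_iotaMat_eq_zero_of_mem_cSub A hX]
    exact zero_mem cSub
  · exact fun _ => lie_iotaMat_mem_vstarSub A
  · exact fun _ => lie_iotaMat_mem_vSub A

/-- Block characterization of `so(3,3)` and its decomposition
`so(3,3) = 𝔤 ⊕ 𝔠 ⊕ 𝔳* ⊕ 𝔳` into `sl(3,ℝ)`-submodules, together with the identification of
each summand as an `sl(3,ℝ)`-module. -/
theorem so33_block_characterization_and_decomposition :
    -- block characterization of membership in so(3,3)
    (∀ P Q R S : M33, InSO33 (Matrix.fromBlocks P Q R S) ↔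
      (S = -Pᵀ ∧ Qᵀ = -Q ∧ Rᵀ = -R)) ∧
    -- existence of the decomposition: so(3,3) = 𝔤 + 𝔠 + 𝔳* + 𝔳
    (∀ X : M66, InSO33 X ↔
      ∃ a ∈ gSub, ∃ c ∈ cSub, ∃ q ∈ vstarSub, ∃ r ∈ vSub, X = a + c + q + r) ∧
    -- uniqueness of the decomposition (internal direct sum)
    (∀ (a a' : gSub) (c c' : cSub) (q q' : vstarSub) (r r' : vSub),
      (a : M66) + c + q + r = (a' : M66) + c' + q' + r' →
        a = a' ∧ c = c' ∧ q = q' ∧ r = r') ∧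
    -- each summand is invariant under `X ↦ ⁅ι A, X⁆` for `A ∈ sl(3,ℝ)`
    (∀ A : M33, A.trace = 0 →
      (∀ X ∈ gSub, ⁅iotaMat A, X⁆ ∈ gSub) ∧
      (∀ X ∈ cSub, ⁅iotaMat A, X⁆ ∈ cSub) ∧
      (∀ X ∈ vstarSub, ⁅iotaMat A, X⁆ ∈ vstarSub) ∧
      (∀ X ∈ vSub, ⁅iotaMat A, X⁆ ∈ vSub)) ∧
    -- 𝔤 is equivariantly isomorphic to the adjoint module sl(3,ℝ)
    (∃ φ : slSub ≃ₗ[ℝ] gSub, ∀ (A : M33) (_ : A.trace = 0) (X : slSub),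
      (φ (adAct A X) : M66) = ⁅iotaMat A, (φ X : M66)⁆) ∧
    -- 𝔠 is a trivial 1-dimensional module
    (Module.finrank ℝ cSub = 1 ∧
      ∀ A : M33, A.trace = 0 → ∀ X ∈ cSub, ⁅iotaMat A, X⁆ = 0) ∧
    -- 𝔳 is equivariantly isomorphic to the standard module ℝ³
    (∃ φ : (Fin 3 → ℝ) ≃ₗ[ℝ] vSub, ∀ (A : M33) (_ : A.trace = 0) (v : Fin 3 → ℝ),
      (φ (A.mulVec v) : M66) = ⁅iotaMat A, (φ v : M66)⁆) ∧
    -- 𝔳* is equivariantly isomorphic to the dual module (ℝ³)*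
    (∃ ψ : Module.Dual ℝ (Fin 3 → ℝ) ≃ₗ[ℝ] vstarSub,
      ∀ (A : M33) (_ : A.trace = 0) (q : Module.Dual ℝ (Fin 3 → ℝ)),
        (ψ (-(q ∘ₗ A.mulVecLin)) : M66) = ⁅iotaMat A, (ψ q : M66)⁆) := by
  obtain ⟨hblock, hexists, hunique, hinv, ⟨φ, hφ⟩, ⟨hrank, htriv⟩, ⟨χ, hχ⟩, ⟨ψ, hψ⟩⟩ :=
    so33_block_characterization_and_decomposition_general
  exact ⟨hblock, hexists, hunique, fun A _ => hinv A, ⟨φ, fun A _ => hφ A⟩,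
    ⟨hrank, fun A _ => htriv A⟩, ⟨χ, fun A hA v => by simpa [hA] using hχ A v⟩,
    ⟨ψ, fun A hA q => by simpa [hA] using hψ A q⟩⟩
end

section
/- Let L be a finite-dimensional simple real Lie algebra whose complexification ℂ ⊗_ℝ L is a simple complex Lie algebra. Then every symmetric bilinear form β on L satisfying β([Z,X], Y) + β(X, [Z,Y]) = 0 for all X, Y, Z ∈ L is a real scalar multiple of the Killing form of L: there exists c ∈ ℝ with β = c·κ_L, where κ_L(X,Y) = trace(ad(X) ∘ ad(Y)). -/
open scoped TensorProduct

/-!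
On an irreducible module the kernels of an invariant form are submodules, so an invariant form is
either zero or nondegenerate. If `β` and `γ ≠ 0` are invariant forms over an algebraically closed
field, the pencil `β - c • γ` contains a degenerate form, which therefore vanishes. Over a smaller
field this argument is applied after extending scalars; the resulting factor is a quotient of two
values `β x y / γ x y`, so it lies in the smaller field.
-/

section InvariantForms

variable {R L M : Type*} [CommRing R] [LieRing L] [AddCommGroup M] [Module R M]
  [LieRingModule L M] {β γ : LinearMap.BilinForm R M}

lemma lieInvariant_flip (hβ : β.lieInvariant L) : β.flip.lieInvariant L := fun x y z ↦ by
  simp only [LinearMap.BilinForm.flip_apply, hβ x z y, neg_neg]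

lemma lieInvariant_sub (hβ : β.lieInvariant L) (hγ : γ.lieInvariant L) :
    (β - γ).lieInvariant L := fun x y z ↦ by
  simp only [LinearMap.sub_apply, hβ x y z, hγ x y z, neg_sub_neg, neg_sub]

lemma lieInvariant_smul (c : R) (hβ : β.lieInvariant L) : (c • β).lieInvariant L :=
  fun x y z ↦ by simp only [LinearMap.smul_apply, hβ x y z, smul_neg]

lemma separatingRight_of_lieInvariant [LieModule.IsIrreducible R L M] (hβ : β.lieInvariant L)
    (hβ₀ : β ≠ 0) : β.SeparatingRight := by
  have mem_orthogonal_top (y : M) :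
      y ∈ LieAlgebra.InvariantForm.orthogonal β hβ ⊤ ↔ ∀ x, β x y = 0 := by
    simp only [LieAlgebra.InvariantForm.mem_orthogonal, LieSubmodule.mem_top, true_imp_iff]
  intro y hy
  rcases eq_bot_or_eq_top (LieAlgebra.InvariantForm.orthogonal β hβ ⊤) with h_bot | h_top
  · rwa [← mem_orthogonal_top, h_bot, LieSubmodule.mem_bot] at hy
  · refine absurd ?_ hβ₀
    ext x z
    exact (mem_orthogonal_top z).mp (by rw [h_top]; exact LieSubmodule.mem_top z) x

lemma nondegenerate_of_lieInvariant [LieModule.IsIrreducible R L M] (hβ : β.lieInvariant L)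
    (hβ₀ : β ≠ 0) : β.Nondegenerate := by
  have hflip : β.flip ≠ 0 := fun h ↦ hβ₀ (by ext x y; exact LinearMap.congr_fun₂ h y x)
  exact ⟨separatingRight_of_lieInvariant (lieInvariant_flip hβ) hflip,
    separatingRight_of_lieInvariant hβ hβ₀⟩

end InvariantForms

section AlgebraicallyClosed

variable {K V : Type*} [Field K] [IsAlgClosed K] [AddCommGroup V] [Module K V]
  [FiniteDimensional K V]

lemma exists_not_nondegenerate_sub_smul [Nontrivial V] (β : LinearMap.BilinForm K V)
    {γ : LinearMap.BilinForm K V} (hγ : γ.Nondegenerate) :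
    ∃ c : K, ¬ (β - c • γ).Nondegenerate := by
  obtain ⟨c, hc⟩ := Module.End.exists_eigenvalue (β.symmCompOfNondegenerate γ hγ)
  obtain ⟨v, hv⟩ := hc.exists_hasEigenvector
  refine ⟨c, fun h ↦ hv.2 (h.1 v fun w ↦ ?_)⟩
  have hγv : γ (c • v) w = β v w := by
    rw [← hv.apply_eq_smul, LinearMap.BilinForm.symmCompOfNondegenerate_left_apply]
  simp only [LinearMap.sub_apply, LinearMap.smul_apply, ← hγv, map_smul, sub_self]

lemma exists_eq_smul_of_lieInvariant {L : Type*} [LieRing L] [LieRingModule L V]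
    [LieModule.IsIrreducible K L V] {β γ : LinearMap.BilinForm K V}
    (hβ : β.lieInvariant L) (hγ : γ.lieInvariant L) (hγ₀ : γ ≠ 0) : ∃ c : K, β = c • γ := by
  have : Nontrivial V := LieModule.nontrivial_of_isIrreducible K L V
  obtain ⟨c, hc⟩ := exists_not_nondegenerate_sub_smul β (nondegenerate_of_lieInvariant hγ hγ₀)
  have hinv : (β - c • γ).lieInvariant L := lieInvariant_sub hβ (lieInvariant_smul c hγ)
  exact ⟨c, sub_eq_zero.mp (not_imp_comm.mp (nondegenerate_of_lieInvariant hinv) hc)⟩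

end AlgebraicallyClosed

section BaseChange

lemma lieInvariant_baseChange {R L M : Type*} (A : Type*) [CommRing R] [CommRing A] [Algebra R A]
    [LieRing L] [LieAlgebra R L] [AddCommGroup M] [Module R M] [LieRingModule L M]
    [LieModule R L M] {β : LinearMap.BilinForm R M} (hβ : β.lieInvariant L) :
    (β.baseChange A).lieInvariant (A ⊗[R] L) := by
  intro x y z
  induction x with
  | zero => simp only [zero_lie, map_zero, LinearMap.zero_apply, neg_zero]
  | add x₁ x₂ h₁ h₂ => simp only [add_lie, map_add, LinearMap.add_apply, h₁, h₂, neg_add]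
  | tmul a x =>
    induction y with
    | zero => simp only [lie_zero, map_zero, LinearMap.zero_apply, neg_zero]
    | add y₁ y₂ h₁ h₂ => simp only [lie_add, map_add, LinearMap.add_apply, h₁, h₂, neg_add]
    | tmul b y =>
      induction z with
      | zero => simp only [lie_zero, map_zero, neg_zero]
      | add z₁ z₂ h₁ h₂ => simp only [lie_add, map_add, h₁, h₂, neg_add]
      | tmul d z =>
        simp only [LieAlgebra.ExtendScalars.bracket_tmul, LinearMap.BilinForm.baseChange_tmul,
          hβ x y z, neg_smul, mul_left_comm b a d, mul_assoc]

lemma exists_eq_smul_of_baseChange_eq_smul {K A V : Type*} [Field K] [CommRing A] [Nontrivial A]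
    [Algebra K A] [AddCommGroup V] [Module K V] {β γ : LinearMap.BilinForm K V} {c : A}
    (h : β.baseChange A = c • γ.baseChange A) : ∃ k : K, β = k • γ := by
  have apply_eq (x y : V) : algebraMap K A (β x y) = c * algebraMap K A (γ x y) := by
    simpa [Algebra.algebraMap_eq_smul_one] using LinearMap.congr_fun₂ h (1 ⊗ₜ x) (1 ⊗ₜ y)
  have algebraMap_inj := FaithfulSMul.algebraMap_injective K A
  by_cases hγ : γ = 0
  · refine ⟨0, ?_⟩
    ext x y
    apply algebraMap_inj
    simp [apply_eq, hγ]
  obtain ⟨x₀, y₀, h₀⟩ : ∃ x₀ y₀, γ x₀ y₀ ≠ 0 := by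
    by_contra! hzero
    exact hγ (LinearMap.ext₂ hzero)
  refine ⟨β x₀ y₀ / γ x₀ y₀, ?_⟩
  ext x y
  have cross_mul : β x y * γ x₀ y₀ = β x₀ y₀ * γ x y := by
    apply algebraMap_inj
    rw [map_mul, map_mul, apply_eq, apply_eq]
    ring
  rw [LinearMap.smul_apply, LinearMap.smul_apply, smul_eq_mul, div_mul_eq_mul_div,
    eq_div_iff h₀, cross_mul]

variable {K : Type*} (A : Type*) {L : Type*} [Field K] [Field A] [Algebra K A]
  [LieRing L] [LieAlgebra K L]

lemma exists_eq_smul_of_lieInvariant_of_isIrreducible_baseChange [IsAlgClosed A] {M : Type*}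
    [AddCommGroup M] [Module K M] [FiniteDimensional K M] [LieRingModule L M] [LieModule K L M]
    [LieModule.IsIrreducible A (A ⊗[K] L) (A ⊗[K] M)] {β γ : LinearMap.BilinForm K M}
    (hβ : β.lieInvariant L) (hγ : γ.lieInvariant L) (hγ₀ : γ ≠ 0) : ∃ k : K, β = k • γ := by
  obtain ⟨c, hc⟩ := exists_eq_smul_of_lieInvariant (lieInvariant_baseChange A hβ)
    (lieInvariant_baseChange A hγ) (mt (LinearMap.BilinForm.baseChange_eq_zero_iff γ).mp hγ₀)
  exact exists_eq_smul_of_baseChange_eq_smul hc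

variable [CharZero K] [FiniteDimensional K L]

lemma killingForm_ne_zero_of_isSimple_baseChange [LieAlgebra.IsSimple A (A ⊗[K] L)] :
    killingForm K L ≠ 0 := by
  intro hzero
  have : CharZero A := charZero_of_injective_algebraMap (algebraMap K A).injective
  have : Nontrivial (A ⊗[K] L) := LieAlgebra.IsSimple.nontrivial A _
  refine (LieAlgebra.IsKilling.killingForm_nondegenerate A (A ⊗[K] L)).ne_zero ?_
  calc killingForm A (A ⊗[K] L)
    _ = (killingForm K L).baseChange A := LieModule.traceForm_baseChange ..
    _ = 0 := by rw [hzero, LinearMap.BilinForm.baseChange_zero]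

theorem invariant_form_eq_smul_killingForm_general [IsAlgClosed A]
    [LieAlgebra.IsSimple A (A ⊗[K] L)] {β : LinearMap.BilinForm K L} (hβ : β.lieInvariant L) :
    ∃ c : K, β = c • killingForm K L :=
  exists_eq_smul_of_lieInvariant_of_isIrreducible_baseChange A hβ
    (LieModule.traceForm_lieInvariant K L L) (killingForm_ne_zero_of_isSimple_baseChange A)

end BaseChange

/-- If `L` is a finite-dimensional simple real Lie algebra whose complexification is a simple
complex Lie algebra, then every invariant symmetric bilinear form on `L` is a real scalar
multiple of the Killing form `κ_L(X,Y) = trace(ad X ∘ ad Y)`. -/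
theorem invariant_form_eq_smul_killingForm
    (L : Type*) [LieRing L] [LieAlgebra ℝ L] [FiniteDimensional ℝ L]
    [LieAlgebra.IsSimple ℝ L] [LieAlgebra.IsSimple ℂ (ℂ ⊗[ℝ] L)]
    (β : LinearMap.BilinForm ℝ L)
    (hsymm : ∀ X Y : L, β X Y = β Y X)
    (hinv : ∀ Z X Y : L, β ⁅Z, X⁆ Y + β X ⁅Z, Y⁆ = 0) :
    ∃ c : ℝ, ∀ X Y : L,
      β X Y = c * LinearMap.trace ℝ L ((LieAlgebra.ad ℝ L X) ∘ₗ (LieAlgebra.ad ℝ L Y)) := by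
  obtain ⟨c, hc⟩ := invariant_form_eq_smul_killingForm_general ℂ
    (fun Z X Y ↦ eq_neg_of_add_eq_zero_left (hinv Z X Y))
  exact ⟨c, LinearMap.congr_fun₂ hc⟩
end

section
/- There is no finite-dimensional simple complex Lie algebra of complex dimension 7, and there is no finite-dimensional simple complex Lie algebra of complex dimension 11. -/
/-!
A simple split Lie algebra has dimension `l + #Φ`, where `l` is its rank and `Φ` its root system.
Since `#Φ` is even, an odd dimension means that `l` is odd. For `l = 1` the dimension is `3`, and
for `3 ≤ l` it is at least `15` because `l * (l + 1) ≤ #Φ` for every irreducible `Φ`.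

For this inequality, adjoin roots `β` one at a time to a connected set of roots with span `W`. The
differences of the roots in the coset `β + W` span a subspace which is invariant under the
reflections in the chosen roots and contains one of them, hence contains all of `W`. So this coset
and its opposite each contain at least `dim W + 1` roots.
-/

theorem finrank_vectorSpan_add_one_le_ncard (K : Type*) {V P : Type*} [DivisionRing K]
    [AddCommGroup V] [Module K V] [AddTorsor V P] {s : Set P} (hs : s.Finite) (hne : s.Nonempty) :
    Module.finrank K (vectorSpan K s) + 1 ≤ s.ncard := by
  have := hs.fintype
  have := hne.to_subtype
  rw [← Nat.card_coe_set_eq, Nat.card_eq_fintype_card]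
  have hrange := finrank_vectorSpan_range_add_one_le K ((↑) : s → P)
  rwa [Subtype.range_coe] at hrange

section RootPairing

open Module Submodule

variable {ι R M N : Type*} [AddCommGroup M] [AddCommGroup N]

section CommRing

variable [CommRing R] [Module R M] [Module R N]

theorem even_natCard_rootPairing_index [Finite ι] [NeZero (2 : R)] [IsDomain R]
    (P : RootPairing ι R M N) : Even (Nat.card ι) := by
  classical
  have := Fintype.ofFinite ι
  let _ := P.indexNeg
  have hsupport : (Equiv.neg ι).support = Finset.univ :=
    Finset.eq_univ_of_forall fun i ↦ Equiv.Perm.mem_support.mpr (P.ne_neg i).symm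
  have hsq : Equiv.neg ι ^ 2 = 1 := by
    ext i
    exact neg_neg i
  rw [Nat.card_eq_fintype_card, even_iff_two_dvd, ← Finset.card_univ, ← hsupport]
  exact Equiv.Perm.two_dvd_card_support hsq

theorem module_finite_of_isRootSystem [Finite ι] (P : RootPairing ι R M N) [P.IsRootSystem] :
    Module.Finite R M :=
  ⟨fg_def.mpr
    ⟨Set.range P.root, Set.finite_range _, RootPairing.IsRootSystem.span_root_eq_top⟩⟩

theorem ncard_root_add_mem_eq_ncard_root_sub_mem (P : RootPairing ι R M N) (W : Submodule R M)
    (v : M) : {k | P.root k + v ∈ W}.ncard = {k | P.root k - v ∈ W}.ncard := by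
  let _ := P.indexNeg
  have himage : Equiv.neg ι '' {k | P.root k - v ∈ W} = {k | P.root k + v ∈ W} := by
    rw [Equiv.image_eq_preimage_symm]
    ext k
    have hneg : P.root (-k) - v = -(P.root k + v) := by
      simp [sub_eq_add_neg, add_comm]
    simp only [Equiv.neg_symm, Set.mem_preimage, Equiv.neg_apply, Set.mem_ofPred_eq, hneg,
      neg_mem_iff]
  rw [← himage, Set.ncard_image_of_injective _ (Equiv.neg ι).injective]

theorem mapsTo_reflectionPerm_setOf_root_sub_mem {P : RootPairing ι R M N} {W : Submodule R M}
    {i : ι} (hi : P.root i ∈ W) (v : M) :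
    Set.MapsTo (P.reflectionPerm i) {k | P.root k - v ∈ W} {k | P.root k - v ∈ W} := by
  intro k hk
  rw [Set.mem_ofPred_eq, P.root_reflectionPerm, P.reflection_apply_root, sub_right_comm]
  exact W.sub_mem hk (W.smul_mem _ hi)

theorem vectorSpan_root_image_mem_invtSubmodule_reflection {P : RootPairing ι R M N} {T : Set ι}
    {i : ι} (hT : Set.MapsTo (P.reflectionPerm i) T T) :
    vectorSpan R (P.root '' T) ∈ End.invtSubmodule (P.reflection i).toLinearMap := by
  have hmap : map (P.reflection i).toLinearMap (vectorSpan R (P.root '' T)) =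
      vectorSpan R (P.reflection i '' (P.root '' T)) :=
    (P.reflection i).toLinearMap.toAffineMap.map_vectorSpan
  rw [End.mem_invtSubmodule_iff_map_le, hmap]
  apply vectorSpan_mono
  rintro _ ⟨_, ⟨k, hk, rfl⟩, rfl⟩
  exact ⟨_, hT hk, P.root_reflectionPerm i k⟩

/-- The graph on the roots of a root pairing in which distinct non-orthogonal roots are adjacent.
Connectedness of a set of roots means connectedness of the subgraph it induces. -/
def nonorthogonalityGraph (P : RootPairing ι R M N) : SimpleGraph ι where
  Adj i j := i ≠ j ∧ ¬ P.IsOrthogonal i j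
  symm := ⟨fun _ _ h ↦ ⟨h.1.symm, fun h' ↦ h.2 h'.symm⟩⟩
  loopless := ⟨fun _ h ↦ h.1 rfl⟩

theorem preconnected_induce_insert_nonorthogonalityGraph {P : RootPairing ι R M N} {s : Set ι}
    {i j : ι} (hs : ((nonorthogonalityGraph P).induce s).Preconnected) (hi : i ∈ s)
    (hij : (nonorthogonalityGraph P).Adj i j) :
    ((nonorthogonalityGraph P).induce (insert j s)).Preconnected := by
  have hunion : s ∪ {i, j} = insert j s := by grind
  rw [← hunion]
  exact (SimpleGraph.induce_union_connected hs
    (SimpleGraph.induce_pair_connected_of_adj hij).preconnected ⟨i, hi, by simp⟩).preconnected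

theorem exists_root_notMem_span_not_isOrthogonal [NeZero (2 : R)] {P : RootPairing ι R M N}
    [P.IsIrreducible] {s : Set ι} (hs : s.Nonempty) (hspan : span R (P.root '' s) ≠ ⊤) :
    ∃ j, P.root j ∉ span R (P.root '' s) ∧ ∃ i ∈ s, ¬ P.IsOrthogonal i j := by
  by_contra! h
  exact hspan <| P.span_root_image_eq_top_of_forall_orthogonal s hs
    fun j hj i hi ↦ (h j hj i hi).symm

end CommRing

section Field

variable {K : Type*} [Field K] [Module K M] [Module K N] {P : RootPairing ι K M N}

theorem natCard_index_le_two_of_finrank_eq_one (P : RootPairing ι K M N) [P.IsReduced]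
    (h : finrank K M = 1) : Nat.card ι ≤ 2 := by
  have hpair (i j : ι) : i = j ∨ i = P.reflectionPerm j j := by
    rw [← P.root_eq_neg_iff]
    by_contra! hij
    have := Module.finite_of_finrank_pos (h ▸ one_pos)
    have hcard :=
      (RootPairing.IsReduced.linearIndependent P hij.1 hij.2).fintype_card_le_finrank
    simp [h] at hcard
  obtain _ | ⟨⟨j⟩⟩ := isEmpty_or_nonempty ι
  · simp
  · have huniv : (Set.univ : Set ι) = {j, P.reflectionPerm j j} := by
      ext i
      simpa using hpair i j
    rw [← Set.ncard_univ, huniv]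
    exact (Set.ncard_insert_le _ _).trans (by simp)

variable [NeZero (2 : K)]

theorem root_mem_of_mem_invtSubmodule_reflection {q : Submodule K M} {i j : ι}
    (hij : ¬ P.IsOrthogonal i j) (hi : P.root i ∈ q)
    (hq : q ∈ End.invtSubmodule (P.reflection j).toLinearMap) : P.root j ∈ q := by
  have hpairing : P.pairing i j ≠ 0 := mt P.isOrthogonal_iff_pairing_eq_zero.mpr hij
  have hreflection : P.root i - P.pairing i j • P.root j ∈ q := by
    simpa [RootPairing.reflection_apply_root] using hq hi
  exact (q.smul_mem_iff hpairing).mp <| (q.sub_mem_iff_right hi).mp hreflection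

theorem span_root_image_le_of_preconnected {s : Set ι} {q : Submodule K M} {i : ι}
    (hs : ((nonorthogonalityGraph P).induce s).Preconnected)
    (hq : ∀ j ∈ s, q ∈ End.invtSubmodule (P.reflection j).toLinearMap)
    (his : i ∈ s) (hi : P.root i ∈ q) :
    span K (P.root '' s) ≤ q := by
  rw [span_le, Set.image_subset_iff]
  intro j hj
  suffices ∀ {u v : s}, ((nonorthogonalityGraph P).induce s).Walk u v →
      P.root v ∈ q → P.root u ∈ q by
    obtain ⟨walk⟩ := hs ⟨j, hj⟩ ⟨i, his⟩
    exact this walk hi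
  intro u v walk hv
  induction walk with
  | nil => exact hv
  | @cons u _ _ hadj _ ih =>
    exact root_mem_of_mem_invtSubmodule_reflection hadj.symm.2 (ih hv) (hq u u.2)

variable [Finite ι]

theorem finrank_span_add_one_le_ncard_root_sub_mem {s : Set ι} {i j : ι}
    (hs : ((nonorthogonalityGraph P).induce s).Preconnected) (hi : i ∈ s)
    (hij : ¬ P.IsOrthogonal i j) :
    finrank K (span K (P.root '' s)) + 1 ≤
      {k | P.root k - P.root j ∈ span K (P.root '' s)}.ncard := by
  set W := span K (P.root '' s)
  set T := {k | P.root k - P.root j ∈ W}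
  have hjT : j ∈ T := by simp [T]
  have hT (k : ι) (hk : k ∈ s) : Set.MapsTo (P.reflectionPerm k) T T :=
    mapsTo_reflectionPerm_setOf_root_sub_mem (subset_span (Set.mem_image_of_mem _ hk)) (P.root j)
  have hroot : P.root i ∈ vectorSpan K (P.root '' T) := by
    have hpairing : P.pairing j i ≠ 0 := fun h ↦
      hij (P.isOrthogonal_iff_pairing_eq_zero.mpr h).symm
    have hdiff : P.root j - P.root (P.reflectionPerm i j) ∈ vectorSpan K (P.root '' T) :=
      vsub_mem_vectorSpan K ⟨j, hjT, rfl⟩ ⟨_, hT i hi hjT, rfl⟩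
    rw [P.root_reflectionPerm, P.reflection_apply_root, sub_sub_cancel] at hdiff
    exact (smul_mem_iff _ hpairing).mp hdiff
  have hW : W ≤ vectorSpan K (P.root '' T) := span_root_image_le_of_preconnected hs
    (fun k hk ↦ vectorSpan_root_image_mem_invtSubmodule_reflection (hT k hk)) hi hroot
  have hfinite : (P.root '' T).Finite := T.toFinite.image P.root
  have := finiteDimensional_vectorSpan_of_finite K hfinite
  calc finrank K W + 1
      ≤ finrank K (vectorSpan K (P.root '' T)) + 1 := by gcongr; exact finrank_mono hW
    _ ≤ (P.root '' T).ncard :=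
        finrank_vectorSpan_add_one_le_ncard K hfinite ⟨_, j, hjT, rfl⟩
    _ = T.ncard := Set.ncard_image_of_injective T P.root.injective

theorem ncard_root_mem_add_le_ncard_root_mem_sup_span_singleton (P : RootPairing ι K M N)
    {W : Submodule K M} {v : M} (hv : v ∉ W) :
    {k | P.root k ∈ W}.ncard + 2 * {k | P.root k - v ∈ W}.ncard ≤
      {k | P.root k ∈ W ⊔ span K {v}}.ncard := by
  have hopposite := ncard_root_add_mem_eq_ncard_root_sub_mem P W v
  set A := {k | P.root k ∈ W}
  set B := {k | P.root k - v ∈ W}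
  set C := {k | P.root k + v ∈ W}
  have hAB : Disjoint A B :=
    Set.disjoint_left.mpr fun k hA hB ↦ hv ((W.sub_mem_iff_right hA).mp hB)
  have hAC : Disjoint A C :=
    Set.disjoint_left.mpr fun k hA hC ↦ hv ((W.add_mem_iff_right hA).mp hC)
  have hBC : Disjoint B C := Set.disjoint_left.mpr fun k hB hC ↦ by
    have htwo : (2 : K) • v ∈ W := by
      convert W.sub_mem hC hB using 1
      module
    exact hv ((W.smul_mem_iff two_ne_zero).mp htwo)
  have hsubset : A ∪ B ∪ C ⊆ {k | P.root k ∈ W ⊔ span K {v}} := by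
    have hvW : v ∈ W ⊔ span K {v} := mem_sup_right (mem_span_singleton_self v)
    rintro k ((hA | hB) | hC)
    · exact mem_sup_left hA
    · exact (Submodule.sub_mem_iff_left _ hvW).mp (mem_sup_left hB)
    · exact (Submodule.add_mem_iff_left _ hvW).mp (mem_sup_left hC)
  calc A.ncard + 2 * B.ncard
      = A.ncard + B.ncard + C.ncard := by rw [hopposite]; ring
    _ = (A ∪ B ∪ C).ncard := by
        rw [Set.ncard_union_eq (hAC.union_left hBC), Set.ncard_union_eq hAB]
    _ ≤ _ := Set.ncard_le_ncard hsubset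

theorem exists_preconnected_insert_of_span_ne_top [P.IsIrreducible] {s : Set ι}
    (hne : s.Nonempty) (hs : ((nonorthogonalityGraph P).induce s).Preconnected)
    (hspan : span K (P.root '' s) ≠ ⊤) :
    ∃ j, P.root j ∉ span K (P.root '' s) ∧
      ((nonorthogonalityGraph P).induce (insert j s)).Preconnected ∧
      {k | P.root k ∈ span K (P.root '' s)}.ncard + 2 * (finrank K (span K (P.root '' s)) + 1) ≤
        {k | P.root k ∈ span K (P.root '' insert j s)}.ncard := by
  obtain ⟨j, hj, i, hi, hij⟩ := exists_root_notMem_span_not_isOrthogonal hne hspan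
  have hadj : (nonorthogonalityGraph P).Adj i j :=
    ⟨fun h ↦ hj (subset_span ⟨i, hi, congrArg P.root h⟩), hij⟩
  refine ⟨j, hj, preconnected_induce_insert_nonorthogonalityGraph hs hi hadj, ?_⟩
  rw [Set.image_insert_eq, span_insert, sup_comm]
  have hcoset := finrank_span_add_one_le_ncard_root_sub_mem hs hi hij
  have hsup := ncard_root_mem_add_le_ncard_root_mem_sup_span_singleton P hj
  lia

theorem two_le_ncard_root_mem_span_singleton (P : RootPairing ι K M N) (i : ι) :
    2 ≤ {k | P.root k ∈ span K {P.root i}}.ncard := by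
  have hpair : {i, P.reflectionPerm i i} ⊆ {k | P.root k ∈ span K {P.root i}} := by
    rintro _ (rfl | rfl) <;> simp [mem_span_singleton_self]
  calc 2 = ({i, P.reflectionPerm i i} : Set ι).ncard := (Set.ncard_pair (P.ne_neg i)).symm
    _ ≤ _ := Set.ncard_le_ncard hpair

theorem exists_preconnected_finrank_span_eq [Nonempty ι] (P : RootPairing ι K M N)
    [P.IsIrreducible] {n : ℕ} (hn : 1 ≤ n) (hnM : n ≤ finrank K M) :
    ∃ s : Set ι, s.Nonempty ∧ ((nonorthogonalityGraph P).induce s).Preconnected ∧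
      finrank K (span K (P.root '' s)) = n ∧
      n * (n + 1) ≤ {k | P.root k ∈ span K (P.root '' s)}.ncard := by
  have := module_finite_of_isRootSystem P
  induction n, hn using Nat.le_induction with
  | base =>
    obtain ⟨i⟩ := ‹Nonempty ι›
    refine ⟨{i}, Set.singleton_nonempty i, .of_subsingleton, ?_⟩
    rw [Set.image_singleton, finrank_span_singleton (P.ne_zero i)]
    exact ⟨rfl, two_le_ncard_root_mem_span_singleton P i⟩
  | succ n _ ih =>
    obtain ⟨s, hne, hs, hrank, hcard⟩ := ih (by lia)
    have hspan : span K (P.root '' s) ≠ ⊤ := fun h ↦ by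
      rw [h, finrank_top] at hrank
      lia
    obtain ⟨j, hj, hjs, hjcard⟩ := exists_preconnected_insert_of_span_ne_top hne hs hspan
    refine ⟨insert j s, Set.insert_nonempty j s, hjs, ?_, by lia⟩
    rw [Set.image_insert_eq, span_insert, sup_comm, finrank_sup_span_singleton hj, hrank]

theorem finrank_mul_finrank_add_one_le_natCard_index (P : RootPairing ι K M N) [P.IsRootSystem]
    [P.IsIrreducible] : finrank K M * (finrank K M + 1) ≤ Nat.card ι := by
  have := RootPairing.IsIrreducible.nontrivial P
  have := module_finite_of_isRootSystem P
  have : Nonempty ι := by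
    by_contra! h
    have hspan : span K (Set.range P.root) = ⊤ := RootPairing.IsRootSystem.span_root_eq_top
    rw [Set.range_eq_empty, span_empty] at hspan
    exact bot_ne_top hspan
  obtain ⟨s, -, -, -, hcard⟩ := exists_preconnected_finrank_span_eq P finrank_pos le_rfl
  exact hcard.trans (Set.ncard_le_card _)

end Field

end RootPairing

section LieAlgebra

open Module LieModule LieAlgebra

theorem finrank_eq_sum_finrank_genWeightSpace (K L V : Type*) [Field K] [LieRing L]
    [LieAlgebra K L] [LieRing.IsNilpotent L] [AddCommGroup V] [Module K V] [LieRingModule L V]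
    [LieModule K L V] [FiniteDimensional K V] [IsTriangularizable K L V] :
    finrank K V = ∑ χ : Weight K L V, finrank K (genWeightSpace V χ) := by
  classical
  have hinternal := DirectSum.isInternal_submodule_of_iSupIndep_of_iSup_eq_top
    (LieSubmodule.iSupIndep_toSubmodule.mpr <| iSupIndep_genWeightSpace' K L V)
    (LieSubmodule.iSup_toSubmodule_eq_top.mpr <| iSup_genWeightSpace_eq_top' K L V)
  rw [← finrank_directSum]
  exact (LinearEquiv.ofBijective (DirectSum.coeLinearMap _) hinternal).finrank_eq.symm

theorem finrank_eq_finrank_cartan_add_natCard_root {K L : Type*} [Field K] [CharZero K]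
    [LieRing L] [LieAlgebra K L] [FiniteDimensional K L] [IsKilling K L] (H : LieSubalgebra K L)
    [H.IsCartanSubalgebra] [IsTriangularizable K H L] :
    finrank K L = finrank K H + Nat.card H.root := by
  classical
  cases subsingleton_or_nontrivial L
  · simp [finrank_zero_of_subsingleton]
  have hzero : finrank K (genWeightSpace L (0 : Weight K H L)) = finrank K H := by
    rw [FunLike.coe_zero]
    exact congrArg (fun N : LieSubmodule K H L ↦ finrank K N) (rootSpace_zero_eq K L H)
  have hroot : Finset.univ.erase (0 : Weight K H L) = H.root := by
    ext χ
    simp [Weight.isNonZero_iff_ne_zero]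
  rw [finrank_eq_sum_finrank_genWeightSpace K H L,
    ← Finset.add_sum_erase _ _ (Finset.mem_univ (0 : Weight K H L)), hzero, hroot,
    Finset.sum_congr rfl fun χ hχ ↦ IsKilling.finrank_rootSpace_eq_one χ (by simpa using hχ),
    ← Finset.card_eq_sum_ones, Nat.card_eq_fintype_card, Fintype.card_coe]

theorem no_simple_complex_lie_algebra_of_dim_seven_or_eleven_general
    {K L : Type*} [Field K] [CharZero K] [LieRing L] [LieAlgebra K L] [FiniteDimensional K L]
    [IsSimple K L] (H : LieSubalgebra K L) [H.IsCartanSubalgebra] [IsTriangularizable K H L]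
    (hodd : Odd (finrank K L)) (hlt : finrank K L < 15) : finrank K L = 3 := by
  have hdim := finrank_eq_finrank_cartan_add_natCard_root H
  have hcard := finrank_mul_finrank_add_one_le_natCard_index (IsKilling.rootSystem H)
  rw [Subspace.dual_finrank_eq] at hcard
  have hrank_odd : Odd (finrank K H) := by
    rw [hdim] at hodd
    exact (Nat.odd_add.mp hodd).mpr (even_natCard_rootPairing_index (IsKilling.rootSystem H))
  have hrank_lt : finrank K H < 3 := by nlinarith
  have hrank : finrank K H = 1 := by
    obtain ⟨m, hm⟩ := hrank_odd
    lia
  have hroots : Nat.card H.root ≤ 2 := natCard_index_le_two_of_finrank_eq_one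
    (IsKilling.rootSystem H) (Subspace.dual_finrank_eq.trans hrank)
  rw [hrank] at hcard hdim
  lia

end LieAlgebra

/-- There is no finite-dimensional simple complex Lie algebra of complex dimension `7`, and
none of complex dimension `11`. -/
theorem no_simple_complex_lie_algebra_of_dim_seven_or_eleven
    (L : Type*) [LieRing L] [LieAlgebra ℂ L] [FiniteDimensional ℂ L]
    (hL : LieAlgebra.IsSimple ℂ L) :
    Module.finrank ℂ L ≠ 7 ∧ Module.finrank ℂ L ≠ 11 := by
  obtain ⟨x, _⟩ := LieAlgebra.exists_isCartanSubalgebra_engel ℂ L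
  have hdim :=
    no_simple_complex_lie_algebra_of_dim_seven_or_eleven_general (LieSubalgebra.engel ℂ x)
  grind
end
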